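/- Let functions M_k : ℝ → ℝ (k ≥ 1) be smooth and satisfy M_k'(s) = -k M_k(s) - M_{k+1}(s) for all s. Define φ(s) := M_0(s) with M_0'(s) = -M_1(s). Then for every k ≥ 1, (-1)^k φ^{(k)}(0) = ∑_{l=1}^k a_l^{(k)} M_l(0), where a_l^{(k)} are defined by a_1^{(k)} = 1, a_k^{(k)} = 1, and a_l^{(k)} = a_{l-1}^{(k-1)} + l·a_l^{(k-1)} for 2 ≤ l ≤ k-1. -/

import Mathlib

theorem stmt4 (M : ℕ → ℝ → ℝ)
    (hsmooth : ∀ k, ContDiff ℝ (⊤ : ℕ∞) (M k))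
    (hrec : ∀ k, 1 ≤ k → ∀ s : ℝ, deriv (M k) s = -(k : ℝ) * M k s - M (k + 1) s)
    (h0 : ∀ s : ℝ, deriv (M 0) s = -(M 1 s))
    (a : ℕ → ℕ → ℝ)
    (ha1 : ∀ k, 1 ≤ k → a 1 k = 1)
    (hak : ∀ k, 1 ≤ k → a k k = 1)
    (harec : ∀ k l, 2 ≤ l → l ≤ k - 1 → a l k = a (l - 1) (k - 1) + l * a l (k - 1)) :
    ∀ k, 1 ≤ k →
      (-1 : ℝ) ^ k * iteratedDeriv k (M 0) 0 = ∑ l ∈ Finset.Icc 1 k, a l k * M l 0 := by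
  have hI : ∀ (f : ℕ → ℝ) (n : ℕ), ∑ l ∈ Finset.Icc 1 n, f l = ∑ i ∈ Finset.range n, f (i + 1) := by
    intro f n
    induction n with
    | zero => simp
    | succ n ih => rw [Finset.sum_Icc_succ_top (by omega), ih, Finset.sum_range_succ]
  have key : ∀ m : ℕ, iteratedDeriv (m + 1) (M 0) =
      fun s => (-1 : ℝ) ^ (m + 1) * ∑ i ∈ Finset.range (m + 1), a (i + 1) (m + 1) * M (i + 1) s := by
    intro m
    induction m with
    | zero =>
      funext s
      simp [iteratedDeriv_one, h0, ha1]
    | succ m ih =>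
      rw [iteratedDeriv_succ, ih]
      funext s
      have hd : ∀ k, 1 ≤ k → HasDerivAt (M k) (-(k : ℝ) * M k s - M (k + 1) s) s := by
        intro k hk
        rw [← hrec k hk s]
        exact ((hsmooth k).differentiable (by simp) s).hasDerivAt
      have hsum : HasDerivAt
          (fun s => ∑ i ∈ Finset.range (m + 1), a (i + 1) (m + 1) * M (i + 1) s)
          (∑ i ∈ Finset.range (m + 1), a (i + 1) (m + 1) *
            (-((i + 1 : ℕ) : ℝ) * M (i + 1) s - M (i + 1 + 1) s)) s :=
        HasDerivAt.fun_sum fun i _ => (hd (i + 1) (by omega)).const_mul _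
      rw [(hsum.const_mul _).deriv, pow_succ (-1 : ℝ) (m + 1), mul_assoc]
      congr 1
      have e1 : ∑ i ∈ Finset.range (m + 1), a (i + 1) (m + 1) *
            (-((i + 1 : ℕ) : ℝ) * M (i + 1) s - M (i + 1 + 1) s)
          = -(∑ i ∈ Finset.range (m + 1), a (i + 1) (m + 1) * ((i + 1 : ℕ) : ℝ) * M (i + 1) s)
            - ∑ i ∈ Finset.range (m + 1), a (i + 1) (m + 1) * M (i + 1 + 1) s := by
        rw [← Finset.sum_neg_distrib, ← Finset.sum_sub_distrib]
        exact Finset.sum_congr rfl fun i _ => by ring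
      have e2 : ∑ i ∈ Finset.range m, a (i + 1 + 1) (m + 1 + 1) * M (i + 1 + 1) s
          = ∑ i ∈ Finset.range m, a (i + 1 + 1) (m + 1) * ((i + 1 + 1 : ℕ) : ℝ) * M (i + 1 + 1) s
            + ∑ i ∈ Finset.range m, a (i + 1) (m + 1) * M (i + 1 + 1) s := by
        rw [← Finset.sum_add_distrib]
        refine Finset.sum_congr rfl fun i hi => ?_
        have hi' := Finset.mem_range.mp hi
        rw [harec (m + 1 + 1) (i + 1 + 1) (by omega) (by omega)]
        simp only [Nat.add_sub_cancel]
        ring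
      rw [e1, Finset.sum_range_succ', Finset.sum_range_succ _ m, Finset.sum_range_succ' _ (m + 1),
        Finset.sum_range_succ _ m, e2, hak (m + 1) (by omega), hak (m + 1 + 1) (by omega)]
      simp only [Nat.zero_add]
      rw [ha1 (m + 1) (by omega), ha1 (m + 1 + 1) (by omega)]
      push_cast
      ring
  intro k hk
  obtain ⟨m, rfl⟩ : ∃ m, k = m + 1 := ⟨k - 1, by omega⟩
  rw [key m, hI]
  simp only
  rw [← mul_assoc, ← mul_pow]
  norm_num
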